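/- For all Schwartz functions u, v ∈ S(ℝⁿ, ℂ), the Wigner transform W(u,v)(x, ξ) := (2π)^{−n} ∫_{ℝⁿ} u(x + y/2) · conj(v(x − y/2)) · e^{−i(y|ξ)} dy is a well-defined Schwartz function on ℝ^{2n} = ℝⁿ × ℝⁿ, and it satisfies the Moyal identity: ∫_{ℝ^{2n}} |W(u,v)(x,ξ)|² dx dξ = (2π)^{−n} ‖u‖_{L²(ℝⁿ)}² · ‖v‖_{L²(ℝⁿ)}². -/

import Mathlib

open MeasureTheory

noncomputable section

/-- Euclidean scalar product on `ℝⁿ`. -/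
def dotn {n : ℕ} (p q : Fin n → ℝ) : ℝ := ∑ i, p i * q i

/-!
Up to scaling, `W(u,v)` is the Fourier transform in `y` of the Schwartz function
`u(x + y/2) conj(v(x - y/2))`, which is `u ⊗ conj v` after a linear change of variables of
determinant `±1`. The partial Fourier transform `F f` of a Schwartz function `f` is again Schwartz:
its derivative is the partial Fourier transform of another Schwartz function, so it suffices to
bound `‖z‖ ^ k * ‖F f z‖`, and this follows from the continuity of the Fourier transform on Schwartz
space, since every Schwartz seminorm of the slice `f (x, ·)` decays rapidly in `x`. Moyal's identity
is Plancherel's theorem on each slice, integrated over `x`.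
-/

open scoped SchwartzMap FourierTransform RealInnerProductSpace

section Tensor

theorem norm_prod_le_one_add_mul_one_add {X Y : Type*} [SeminormedAddCommGroup X]
    [SeminormedAddCommGroup Y] (z : X × Y) : ‖z‖ ≤ (1 + ‖z.1‖) * (1 + ‖z.2‖) := by
  have h₁ := norm_nonneg z.1
  have h₂ := norm_nonneg z.2
  refine max_le ?_ ?_ <;> nlinarith

variable {X Y E F G : Type*} [NormedAddCommGroup X] [NormedSpace ℝ X]
  [NormedAddCommGroup Y] [NormedSpace ℝ Y] [NormedAddCommGroup E] [NormedSpace ℝ E]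
  [NormedAddCommGroup F] [NormedSpace ℝ F] [NormedAddCommGroup G] [NormedSpace ℝ G]

theorem norm_iteratedFDeriv_comp_clm_le {f : Y → E} {m : ℕ} (hf : ContDiff ℝ m f)
    {L : X →L[ℝ] Y} (hL : ‖L‖ ≤ 1) (x : X) :
    ‖iteratedFDeriv ℝ m (fun x ↦ f (L x)) x‖ ≤ ‖iteratedFDeriv ℝ m f (L x)‖ := by
  change ‖iteratedFDeriv ℝ m (f ∘ L) x‖ ≤ _
  rw [L.iteratedFDeriv_comp_right hf x le_rfl]
  refine (ContinuousMultilinearMap.norm_compContinuousLinearMap_le _ _).trans ?_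
  exact mul_le_of_le_one_right (norm_nonneg _)
    (Finset.prod_le_one (fun _ _ ↦ norm_nonneg _) fun _ _ ↦ hL)

theorem schwartz_exists_one_add_pow_mul_le (u : 𝓢(X, E)) (k m : ℕ) :
    ∃ C, ∀ x, (1 + ‖x‖) ^ k * ‖iteratedFDeriv ℝ m u x‖ ≤ C :=
  ⟨_, SchwartzMap.one_add_le_sup_seminorm_apply (𝕜 := ℝ) (m := (k, m)) le_rfl le_rfl u⟩

theorem norm_iteratedFDeriv_tensor_le (B : E →L[ℝ] F →L[ℝ] G) (u : 𝓢(X, E)) (v : 𝓢(Y, F)) (m : ℕ)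
    (z : X × Y) :
    ‖iteratedFDeriv ℝ m (fun z : X × Y ↦ B (u z.1) (v z.2)) z‖ ≤
      ‖B‖ * ∑ i ∈ Finset.range (m + 1),
        m.choose i * ‖iteratedFDeriv ℝ i u z.1‖ * ‖iteratedFDeriv ℝ (m - i) v z.2‖ := by
  refine (B.norm_iteratedFDeriv_le_of_bilinear ((u.smooth m).comp contDiff_fst)
    ((v.smooth m).comp contDiff_snd) z le_rfl).trans ?_
  gcongr with i
  · exact norm_iteratedFDeriv_comp_clm_le (u.smooth i) (ContinuousLinearMap.norm_fst_le ℝ X Y) z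
  · exact norm_iteratedFDeriv_comp_clm_le (v.smooth (m - i))
      (ContinuousLinearMap.norm_snd_le ℝ X Y) z

theorem exists_pow_mul_norm_iteratedFDeriv_tensor_le (B : E →L[ℝ] F →L[ℝ] G) (u : 𝓢(X, E))
    (v : 𝓢(Y, F)) (k m : ℕ) :
    ∃ C, ∀ z : X × Y,
      ‖z‖ ^ k * ‖iteratedFDeriv ℝ m (fun z : X × Y ↦ B (u z.1) (v z.2)) z‖ ≤ C := by
  choose a ha using schwartz_exists_one_add_pow_mul_le u k
  choose b hb using schwartz_exists_one_add_pow_mul_le v k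
  refine ⟨‖B‖ * ∑ i ∈ Finset.range (m + 1), m.choose i * (a i * b (m - i)), fun z ↦ ?_⟩
  calc ‖z‖ ^ k * ‖iteratedFDeriv ℝ m (fun z : X × Y ↦ B (u z.1) (v z.2)) z‖
      ≤ ((1 + ‖z.1‖) * (1 + ‖z.2‖)) ^ k * (‖B‖ * ∑ i ∈ Finset.range (m + 1),
          m.choose i * ‖iteratedFDeriv ℝ i u z.1‖ * ‖iteratedFDeriv ℝ (m - i) v z.2‖) := by
        gcongr
        · exact norm_prod_le_one_add_mul_one_add z
        · exact norm_iteratedFDeriv_tensor_le B u v m z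
    _ = ‖B‖ * ∑ i ∈ Finset.range (m + 1), m.choose i *
          (((1 + ‖z.1‖) ^ k * ‖iteratedFDeriv ℝ i u z.1‖) *
            ((1 + ‖z.2‖) ^ k * ‖iteratedFDeriv ℝ (m - i) v z.2‖)) := by
        simp only [Finset.mul_sum, mul_pow]
        exact Finset.sum_congr rfl fun _ _ ↦ by ring
    _ ≤ ‖B‖ * ∑ i ∈ Finset.range (m + 1), m.choose i * (a i * b (m - i)) := by
        gcongr with i
        · exact (by positivity : (0 : ℝ) ≤ _).trans (ha i z.1)
        · exact ha i z.1
        · exact hb (m - i) z.2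

/-- The tensor product `(x, y) ↦ B (u x) (v y)` of two Schwartz functions with respect to a
continuous bilinear map `B`, as a Schwartz function. -/
def schwartzTensor (B : E →L[ℝ] F →L[ℝ] G) (u : 𝓢(X, E)) (v : 𝓢(Y, F)) : 𝓢(X × Y, G) where
  toFun z := B (u z.1) (v z.2)
  smooth' := B.isBoundedBilinearMap.contDiff.comp₂
    ((u.smooth ⊤).comp contDiff_fst) ((v.smooth ⊤).comp contDiff_snd)
  decay' := exists_pow_mul_norm_iteratedFDeriv_tensor_le B u v

@[simp]
theorem schwartzTensor_apply (B : E →L[ℝ] F →L[ℝ] G) (u : 𝓢(X, E)) (v : 𝓢(Y, F)) (z : X × Y) :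
    schwartzTensor B u v z = B (u z.1) (v z.2) := rfl

end Tensor

section Slice

variable {X Y E : Type*} [NormedAddCommGroup X] [NormedSpace ℝ X]
  [NormedAddCommGroup Y] [NormedSpace ℝ Y] [NormedAddCommGroup E] [NormedSpace ℝ E]

theorem norm_iteratedFDeriv_slice_le (f : 𝓢(X × Y, E)) (m : ℕ) (x : X) (y : Y) :
    ‖iteratedFDeriv ℝ m (fun y ↦ f (x, y)) y‖ ≤ ‖iteratedFDeriv ℝ m f (x, y)‖ := by
  have hf : ContDiff ℝ m fun z ↦ f ((x, 0) + z) := (f.smooth m).comp (by fun_prop)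
  simpa [iteratedFDeriv_comp_add_left] using
    norm_iteratedFDeriv_comp_clm_le hf (ContinuousLinearMap.norm_inr_le_one ℝ X Y) y

theorem pow_mul_pow_mul_norm_iteratedFDeriv_slice_le (f : 𝓢(X × Y, E)) (j k m : ℕ) (x : X)
    (y : Y) :
    ‖x‖ ^ j * (‖y‖ ^ k * ‖iteratedFDeriv ℝ m (fun y ↦ f (x, y)) y‖) ≤
      SchwartzMap.seminorm ℝ (j + k) m f :=
  calc ‖x‖ ^ j * (‖y‖ ^ k * ‖iteratedFDeriv ℝ m (fun y ↦ f (x, y)) y‖)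
      ≤ ‖(x, y)‖ ^ j * (‖(x, y)‖ ^ k * ‖iteratedFDeriv ℝ m f (x, y)‖) := by
        gcongr
        · exact norm_fst_le (x, y)
        · exact norm_snd_le (x, y)
        · exact norm_iteratedFDeriv_slice_le f m x y
    _ = ‖(x, y)‖ ^ (j + k) * ‖iteratedFDeriv ℝ m f (x, y)‖ := by rw [pow_add, mul_assoc]
    _ ≤ SchwartzMap.seminorm ℝ (j + k) m f := f.le_seminorm ℝ _ _ _

/-- The slice `y ↦ f (x, y)` of a Schwartz function on a product, as a Schwartz function. -/
def schwartzSlice (f : 𝓢(X × Y, E)) (x : X) : 𝓢(Y, E) where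
  toFun y := f (x, y)
  smooth' := (f.smooth ⊤).comp (by fun_prop)
  decay' k m := ⟨SchwartzMap.seminorm ℝ (0 + k) m f, fun y ↦ by
    simpa only [pow_zero, one_mul] using
      pow_mul_pow_mul_norm_iteratedFDeriv_slice_le f 0 k m x y⟩

theorem pow_mul_seminorm_schwartzSlice_le (f : 𝓢(X × Y, E)) (j k m : ℕ) (x : X) :
    ‖x‖ ^ j * SchwartzMap.seminorm ℝ k m (schwartzSlice f x) ≤
      SchwartzMap.seminorm ℝ (j + k) m f := by
  have h : SchwartzMap.seminorm ℝ k m (‖x‖ ^ j • schwartzSlice f x) ≤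
      SchwartzMap.seminorm ℝ (j + k) m f := by
    refine SchwartzMap.seminorm_le_bound ℝ k m _ (apply_nonneg _ _) fun y ↦ ?_
    change ‖y‖ ^ k * ‖iteratedFDeriv ℝ m (‖x‖ ^ j • ⇑(schwartzSlice f x)) y‖ ≤ _
    rw [iteratedFDeriv_const_smul_apply ((schwartzSlice f x).smooth m).contDiffAt, norm_smul,
      norm_pow, norm_norm, mul_left_comm]
    exact pow_mul_pow_mul_norm_iteratedFDeriv_slice_le f j k m x y
  rwa [map_smul_eq_mul, norm_pow, norm_norm] at h

theorem exists_integrable_bound_slice [MeasurableSpace Y] (μ : Measure Y) [μ.HasTemperateGrowth]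
    (f : 𝓢(X × Y, E)) : ∃ b : Y → ℝ, Integrable b μ ∧ ∀ x y, ‖f (x, y)‖ ≤ b y := by
  obtain ⟨C, hC⟩ := schwartz_exists_one_add_pow_mul_le f μ.integrablePower 0
  refine ⟨fun y ↦ C * (1 + ‖y‖) ^ (-(μ.integrablePower : ℝ)),
    μ.integrable_pow_neg_integrablePower.const_mul C, fun x y ↦ ?_⟩
  simp only [Real.rpow_neg (by positivity : 0 ≤ 1 + ‖y‖), Real.rpow_natCast]
  rw [← div_eq_mul_inv, le_div_iff₀ (by positivity), mul_comm,
    ← norm_iteratedFDeriv_zero (𝕜 := ℝ)]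
  refine le_trans ?_ (hC (x, y))
  gcongr
  exact norm_snd_le (x, y)

end Slice

section PartialFourier

-- Needed to find the instances on `X × V →L[ℝ] E` when `V` is an inner product space.
set_option maxSynthPendingDepth 3

universe u

-- One universe for all spaces: differentiating replaces `E` by `X × V →L[ℝ] E`.
variable {X V E : Type u} [NormedAddCommGroup X] [NormedSpace ℝ X]
  [NormedAddCommGroup V] [InnerProductSpace ℝ V] [NormedAddCommGroup E] [NormedSpace ℂ E]

/-- The Schwartz function `(x, y) ↦ ∂ₓf (x, y) - 2πi ⟪y, ·⟫ f (x, y)`, whose partial Fourier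
transform is the derivative of the partial Fourier transform of `f`. -/
def partialFourierDeriv (f : 𝓢(X × V, E)) : 𝓢(X × V, X × V →L[ℝ] E) :=
  (SchwartzMap.fderivCLM ℝ _ E f).postcompCLM
      ((ContinuousLinearMap.compL ℝ (X × V) (X × V) E).flip
        (.inl ℝ X V ∘L .fst ℝ X V)) -
    (2 * Real.pi * Complex.I) •
      SchwartzMap.smulRightCLM ℂ E
        ((innerSL ℝ).bilinearComp (.snd ℝ X V) (.snd ℝ X V)) f

theorem partialFourierDeriv_apply (f : 𝓢(X × V, E)) (z w : X × V) :
    partialFourierDeriv f z w =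
      fderiv ℝ f z (w.1, 0) - (2 * Real.pi * Complex.I) • ⟪z.2, w.2⟫ • f z := by
  simp [partialFourierDeriv]

theorem hasFDerivAt_fourierChar_smul_slice (f : 𝓢(X × V, E)) (y : V) (z : X × V) :
    HasFDerivAt (fun z : X × V ↦ 𝐞 (-⟪y, z.2⟫) • f (z.1, y))
      (𝐞 (-⟪y, z.2⟫) • partialFourierDeriv f (z.1, y)) z := by
  have hchar : HasFDerivAt (fun z : X × V ↦ (𝐞 (-⟪y, z.2⟫) : ℂ)) _ z :=
    (Real.hasFDerivAt_fourierChar_neg_bilinear_right (innerSL ℝ) y z.2).comp z hasFDerivAt_snd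
  have hf : HasFDerivAt (fun z : X × V ↦ f (z.1, y)) _ z :=
    (f.hasFDerivAt (z.1, y)).comp z (hasFDerivAt_fst.prodMk (hasFDerivAt_const y z))
  refine (hchar.smul hf).congr_fderiv (ContinuousLinearMap.ext fun w ↦ ?_)
  simp only [add_apply, smul_apply, zero_apply, ContinuousLinearMap.comp_apply,
    ContinuousLinearMap.smulRight_apply, ContinuousLinearMap.prod_apply,
    ContinuousLinearMap.coe_fst', ContinuousLinearMap.coe_snd', Complex.ofRealCLM_apply,
    innerSL_apply_apply ℝ, partialFourierDeriv_apply, Circle.smul_def, smul_eq_mul,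
    ← Complex.coe_smul]
  module

variable [FiniteDimensional ℝ V] [MeasurableSpace V] [BorelSpace V]

/-- The Fourier transform of a Schwartz function on `X × V` in the second variable, in Mathlib's
normalization `(x, η) ↦ ∫ y, exp (-2πi⟪y, η⟫) • f (x, y)`. -/
def partialFourier (f : 𝓢(X × V, E)) (z : X × V) : E := 𝓕 (schwartzSlice f z.1) z.2

theorem partialFourier_eq_integral (f : 𝓢(X × V, E)) (z : X × V) :
    partialFourier f z = ∫ y, 𝐞 (-⟪y, z.2⟫) • f (z.1, y) := rfl

theorem integrable_fourierChar_smul_slice (f : 𝓢(X × V, E)) (z : X × V) :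
    Integrable fun y ↦ 𝐞 (-⟪y, z.2⟫) • f (z.1, y) :=
  (Real.fourierIntegral_convergent_iff z.2).2 (schwartzSlice f z.1).integrable

theorem hasFDerivAt_partialFourier (f : 𝓢(X × V, E)) (z : X × V) :
    HasFDerivAt (partialFourier f) (partialFourier (partialFourierDeriv f) z) z := by
  obtain ⟨b, hb, hle⟩ := exists_integrable_bound_slice volume (partialFourierDeriv f)
  exact hasFDerivAt_integral_of_dominated_of_fderiv_le (𝕜 := ℝ) (bound := b) (x₀ := z)
    (F' := fun z y ↦ 𝐞 (-⟪y, z.2⟫) • partialFourierDeriv f (z.1, y)) Filter.univ_mem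
    (.of_forall fun w ↦ (integrable_fourierChar_smul_slice f w).aestronglyMeasurable)
    (integrable_fourierChar_smul_slice f z)
    (integrable_fourierChar_smul_slice (E := X × V →L[ℝ] E)
      (partialFourierDeriv f) z).aestronglyMeasurable
    (.of_forall fun y w _ ↦ (Circle.norm_smul _ _).trans_le (hle w.1 y)) hb
    (.of_forall fun y w _ ↦ hasFDerivAt_fourierChar_smul_slice f y w)

theorem fderiv_partialFourier (f : 𝓢(X × V, E)) :
    fderiv ℝ (partialFourier f) = partialFourier (partialFourierDeriv f) :=
  funext fun z ↦ (hasFDerivAt_partialFourier f z).fderiv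

theorem contDiff_partialFourier (m : ℕ) (f : 𝓢(X × V, E)) : ContDiff ℝ m (partialFourier f) := by
  induction m generalizing E with
  | zero =>
    exact contDiff_zero.2 <| continuous_iff_continuousAt.2 fun z ↦
      (hasFDerivAt_partialFourier f z).continuousAt
  | succ m ih =>
    exact contDiff_succ_iff_hasFDerivAt.2
      ⟨_, ih (partialFourierDeriv f), hasFDerivAt_partialFourier f⟩

theorem exists_pow_mul_seminorm_fourier_slice_le (f : 𝓢(X × V, E)) (j k : ℕ) :
    ∃ C, ∀ x, ‖x‖ ^ j * SchwartzMap.seminorm ℝ k 0 (𝓕 (schwartzSlice f x)) ≤ C := by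
  let q : Seminorm ℝ 𝓢(V, E) := (SchwartzMap.seminorm ℝ k 0).comp
    (FourierTransform.fourierCLM ℝ 𝓢(V, E)).toLinearMap
  have hq : Continuous q := ((schwartz_withSeminorms ℝ V E).continuous_seminorm (k, 0)).comp
    (FourierTransform.fourierCLM ℝ 𝓢(V, E)).continuous
  obtain ⟨s, C, -, hC⟩ := Seminorm.bound_of_continuous (schwartz_withSeminorms ℝ V E) q hq
  have hsum (g : 𝓢(V, E)) : SchwartzMap.seminorm ℝ k 0 (𝓕 g) ≤
      C * ∑ i ∈ s, SchwartzMap.seminorm ℝ i.1 i.2 g := by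
    refine (hC g).trans ?_
    have := Seminorm.finset_sup_le_sum (schwartzSeminormFamily ℝ V E) s g
    simpa [NNReal.smul_def, schwartzSeminormFamily] using mul_le_mul_of_nonneg_left this C.2
  refine ⟨C * ∑ i ∈ s, SchwartzMap.seminorm ℝ (j + i.1) i.2 f, fun x ↦ ?_⟩
  calc ‖x‖ ^ j * SchwartzMap.seminorm ℝ k 0 (𝓕 (schwartzSlice f x))
      ≤ ‖x‖ ^ j * (C * ∑ i ∈ s, SchwartzMap.seminorm ℝ i.1 i.2 (schwartzSlice f x)) := by
        gcongr
        exact hsum _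
    _ = C * ∑ i ∈ s, ‖x‖ ^ j * SchwartzMap.seminorm ℝ i.1 i.2 (schwartzSlice f x) := by
        rw [← Finset.mul_sum, mul_left_comm]
    _ ≤ C * ∑ i ∈ s, SchwartzMap.seminorm ℝ (j + i.1) i.2 f := by
        gcongr
        exact pow_mul_seminorm_schwartzSlice_le f j _ _ x

theorem exists_pow_mul_norm_partialFourier_le (f : 𝓢(X × V, E)) (k : ℕ) :
    ∃ C, ∀ z, ‖z‖ ^ k * ‖partialFourier f z‖ ≤ C := by
  obtain ⟨A, hA⟩ := exists_pow_mul_seminorm_fourier_slice_le f k 0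
  obtain ⟨B, hB⟩ := exists_pow_mul_seminorm_fourier_slice_le f 0 k
  have hle (k : ℕ) (z : X × V) : ‖z.2‖ ^ k * ‖partialFourier f z‖ ≤
      SchwartzMap.seminorm ℝ k 0 (𝓕 (schwartzSlice f z.1)) :=
    SchwartzMap.norm_pow_mul_le_seminorm ℝ _ k z.2
  refine ⟨max A B, fun z ↦ ?_⟩
  rcases le_total ‖z.1‖ ‖z.2‖ with h | h
  · rw [Prod.norm_def, max_eq_right h]
    refine (hle k z).trans (le_max_of_le_right ?_)
    simpa using hB z.1
  · rw [Prod.norm_def, max_eq_left h]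
    refine le_max_of_le_left (le_trans ?_ (hA z.1))
    gcongr
    simpa using hle 0 z

theorem exists_pow_mul_norm_iteratedFDeriv_partialFourier_le (k m : ℕ) (f : 𝓢(X × V, E)) :
    ∃ C, ∀ z, ‖z‖ ^ k * ‖iteratedFDeriv ℝ m (partialFourier f) z‖ ≤ C := by
  induction m generalizing E with
  | zero => simpa only [norm_iteratedFDeriv_zero] using exists_pow_mul_norm_partialFourier_le f k
  | succ m ih =>
    simpa only [← norm_iteratedFDeriv_fderiv, fderiv_partialFourier] using
      ih (partialFourierDeriv f)

/-- The partial Fourier transform of a Schwartz function, as a Schwartz function. -/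
def schwartzPartialFourier (f : 𝓢(X × V, E)) : 𝓢(X × V, E) where
  toFun := partialFourier f
  smooth' := contDiff_infty.2 fun m ↦ contDiff_partialFourier m f
  decay' k m := exists_pow_mul_norm_iteratedFDeriv_partialFourier_le k m f

end PartialFourier

section Wigner

theorem integrable_norm_sq_schwartz {X E : Type*} [NormedAddCommGroup X] [NormedSpace ℝ X]
    [NormedAddCommGroup E] [NormedSpace ℝ E] [MeasurableSpace X] [BorelSpace X]
    [SecondCountableTopology X] (μ : Measure X) [μ.HasTemperateGrowth] (f : 𝓢(X, E)) :
    Integrable (fun x ↦ ‖f x‖ ^ 2) μ :=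
  (memLp_two_iff_integrable_sq_norm (f.memLp 2 μ).aestronglyMeasurable).1 (f.memLp 2 μ)

/-- The linear change of variables `(x, y) ↦ (x + y / 2, x - y / 2)`. -/
def midpointEquiv (V : Type*) [NormedAddCommGroup V] [NormedSpace ℝ V] : (V × V) ≃L[ℝ] V × V :=
  let x := ContinuousLinearMap.fst ℝ V V
  let y := ContinuousLinearMap.snd ℝ V V
  .equivOfInverse ((x + (2⁻¹ : ℝ) • y).prod (x - (2⁻¹ : ℝ) • y))
    (((2⁻¹ : ℝ) • (x + y)).prod (x - y))
    (fun z ↦ Prod.ext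
      (show (2⁻¹ : ℝ) • (z.1 + (2⁻¹ : ℝ) • z.2 + (z.1 - (2⁻¹ : ℝ) • z.2)) = z.1 by module)
      (show z.1 + (2⁻¹ : ℝ) • z.2 - (z.1 - (2⁻¹ : ℝ) • z.2) = z.2 by module))
    (fun z ↦ Prod.ext
      (show (2⁻¹ : ℝ) • (z.1 + z.2) + (2⁻¹ : ℝ) • (z.1 - z.2) = z.1 by module)
      (show (2⁻¹ : ℝ) • (z.1 + z.2) - (2⁻¹ : ℝ) • (z.1 - z.2) = z.2 by module))

theorem measurePreserving_midpointEquiv {V : Type*} [NormedAddCommGroup V] [NormedSpace ℝ V]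
    [MeasurableSpace V] [BorelSpace V] [SecondCountableTopology V] (μ : Measure V) [SFinite μ]
    [μ.IsAddRightInvariant] :
    MeasurePreserving (midpointEquiv V) (μ.prod μ) (μ.prod μ) := by
  have hshear : MeasurePreserving (fun z : V × V ↦ (z.1, z.2 - (2⁻¹ : ℝ) • z.1))
      (μ.prod μ) (μ.prod μ) :=
    (MeasurePreserving.id μ).skew_product (g := fun y x ↦ x - (2⁻¹ : ℝ) • y) (by fun_prop)
      (.of_forall fun y ↦ (measurePreserving_sub_right μ _).map_eq)
  convert ((measurePreserving_add_prod μ μ).comp hshear).comp Measure.measurePreserving_swap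
    using 1
  ext1 z
  refine Prod.ext ?_ rfl
  change z.1 + (2⁻¹ : ℝ) • z.2 = z.2 + (z.1 - (2⁻¹ : ℝ) • z.2)
  module

section Kernel

variable {V : Type*} [NormedAddCommGroup V] [NormedSpace ℝ V]

/-- The function `(x, y) ↦ u (x + y / 2) * conj (v (x - y / 2))`, whose Fourier transform in `y`
is the Wigner transform of `u` and `v`. -/
def wignerKernel (u v : 𝓢(V, ℂ)) : 𝓢(V × V, ℂ) :=
  SchwartzMap.compCLMOfContinuousLinearEquiv ℂ (midpointEquiv V)
    (schwartzTensor (.mul ℝ ℂ) u (v.postcompCLM (Complex.conjCLE : ℂ →L[ℝ] ℂ)))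

theorem wignerKernel_apply (u v : 𝓢(V, ℂ)) (x y : V) :
    wignerKernel u v (x, y) =
      u (x + (2⁻¹ : ℝ) • y) * (starRingEnd ℂ) (v (x - (2⁻¹ : ℝ) • y)) := rfl

theorem integral_norm_sq_wignerKernel [MeasurableSpace V] [BorelSpace V]
    [SecondCountableTopology V] (μ : Measure V) [SFinite μ] [μ.IsAddRightInvariant]
    (u v : 𝓢(V, ℂ)) :
    ∫ z, ‖wignerKernel u v z‖ ^ 2 ∂μ.prod μ = (∫ x, ‖u x‖ ^ 2 ∂μ) * ∫ x, ‖v x‖ ^ 2 ∂μ :=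
  calc ∫ z, ‖wignerKernel u v z‖ ^ 2 ∂μ.prod μ
      = ∫ z, ‖u (midpointEquiv V z).1‖ ^ 2 * ‖v (midpointEquiv V z).2‖ ^ 2 ∂μ.prod μ := by
        simp [wignerKernel, mul_pow]
    _ = ∫ z, ‖u z.1‖ ^ 2 * ‖v z.2‖ ^ 2 ∂μ.prod μ :=
        (measurePreserving_midpointEquiv μ).integral_comp
          (midpointEquiv V).toHomeomorph.measurableEmbedding fun z ↦ ‖u z.1‖ ^ 2 * ‖v z.2‖ ^ 2
    _ = (∫ x, ‖u x‖ ^ 2 ∂μ) * ∫ x, ‖v x‖ ^ 2 ∂μ :=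
        integral_prod_mul (fun x ↦ ‖u x‖ ^ 2) fun x ↦ ‖v x‖ ^ 2

end Kernel

-- `V` lives in the universe of `ℂ`, as `partialFourier` requires.
variable {V : Type} [NormedAddCommGroup V] [InnerProductSpace ℝ V] [FiniteDimensional ℝ V]
  [MeasurableSpace V] [BorelSpace V]

/-- The Wigner transform
`(x, ξ) ↦ (2π)^{-d} ∫ y, u (x + y / 2) * conj (v (x - y / 2)) * exp (-i⟪y, ξ⟫)` of Schwartz
functions on a Euclidean space of dimension `d`. The frequency is divided by `2π` to pass from
the normalization of `partialFourier`. -/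
def wigner (u v : 𝓢(V, ℂ)) : 𝓢(V × V, ℂ) :=
  ((2 * Real.pi) ^ Module.finrank ℝ V)⁻¹ •
    SchwartzMap.compCLMOfContinuousLinearEquiv ℂ
      ((ContinuousLinearEquiv.refl ℝ V).prodCongr
        (.smulLeft (Units.mk0 (2 * Real.pi)⁻¹ (by positivity))))
      (schwartzPartialFourier (wignerKernel u v))

theorem wigner_eq_smul_partialFourier (u v : 𝓢(V, ℂ)) (x ξ : V) :
    wigner u v (x, ξ) = ((2 * Real.pi) ^ Module.finrank ℝ V)⁻¹ •
      partialFourier (wignerKernel u v) (x, (2 * Real.pi)⁻¹ • ξ) := rfl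

theorem wigner_apply (u v : 𝓢(V, ℂ)) (x ξ : V) :
    wigner u v (x, ξ) = (((2 * Real.pi) ^ Module.finrank ℝ V)⁻¹ : ℝ) *
      ∫ y, u (x + (2⁻¹ : ℝ) • y) * (starRingEnd ℂ) (v (x - (2⁻¹ : ℝ) • y)) *
        Complex.exp (-Complex.I * (⟪y, ξ⟫ : ℝ)) := by
  rw [wigner_eq_smul_partialFourier, partialFourier_eq_integral, Complex.real_smul]
  congr 2
  funext y
  rw [Circle.smul_def, smul_eq_mul, mul_comm, wignerKernel_apply, Real.fourierChar_apply,
    real_inner_smul_right]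
  congr 2
  push_cast
  field_simp

theorem integral_norm_sq_wigner_slice (u v : 𝓢(V, ℂ)) (x : V) :
    ∫ ξ, ‖wigner u v (x, ξ)‖ ^ 2 =
      ((2 * Real.pi) ^ Module.finrank ℝ V)⁻¹ * ∫ y, ‖wignerKernel u v (x, y)‖ ^ 2 := by
  have plancherel : ∫ η, ‖partialFourier (wignerKernel u v) (x, η)‖ ^ 2 =
      ∫ y, ‖wignerKernel u v (x, y)‖ ^ 2 :=
    (schwartzSlice (wignerKernel u v) x).integral_norm_sq_fourier
  simp only [wigner_eq_smul_partialFourier, norm_smul, mul_pow (‖_‖)]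
  rw [integral_const_mul, Measure.integral_comp_smul volume
    (fun η ↦ ‖partialFourier (wignerKernel u v) (x, η)‖ ^ 2), plancherel,
    norm_inv, Real.norm_of_nonneg (by positivity), abs_of_nonneg (by positivity), smul_eq_mul,
    inv_pow (2 * Real.pi), inv_inv]
  field_simp

theorem integral_norm_sq_wigner (u v : 𝓢(V, ℂ)) :
    ∫ z, ‖wigner u v z‖ ^ 2 =
      ((2 * Real.pi) ^ Module.finrank ℝ V)⁻¹ * (∫ x, ‖u x‖ ^ 2) * ∫ x, ‖v x‖ ^ 2 := by
  rw [Measure.volume_eq_prod, integral_prod _ (integrable_norm_sq_schwartz _ _)]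
  simp only [integral_norm_sq_wigner_slice]
  rw [integral_const_mul, ← integral_prod _ (integrable_norm_sq_schwartz _ _),
    integral_norm_sq_wignerKernel, mul_assoc]

end Wigner

section Coordinates

variable {n : ℕ} {E : Type*} [NormedAddCommGroup E] [NormedSpace ℝ E]

theorem integral_comp_ofLp (f : (Fin n → ℝ) → E) :
    ∫ x : EuclideanSpace ℝ (Fin n), f x.ofLp = ∫ x, f x :=
  (PiLp.volume_preserving_ofLp (Fin n)).integral_comp
    (MeasurableEquiv.toLp 2 (Fin n → ℝ)).symm.measurableEmbedding f

theorem integral_prod_comp_toLp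
    (f : EuclideanSpace ℝ (Fin n) × EuclideanSpace ℝ (Fin n) → E) :
    ∫ z : (Fin n → ℝ) × (Fin n → ℝ), f (WithLp.toLp 2 z.1, WithLp.toLp 2 z.2) = ∫ z, f z :=
  ((PiLp.volume_preserving_toLp (Fin n)).prod (PiLp.volume_preserving_toLp (Fin n))).integral_comp
    ((MeasurableEquiv.toLp 2 (Fin n → ℝ)).prodCongr
      (MeasurableEquiv.toLp 2 (Fin n → ℝ))).measurableEmbedding f

theorem inner_eq_dotn (x y : EuclideanSpace ℝ (Fin n)) : ⟪x, y⟫ = dotn x.ofLp y.ofLp :=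
  Finset.sum_congr rfl fun _ _ ↦ mul_comm _ _

end Coordinates

/-- For Schwartz functions `u, v` on `ℝⁿ`, the Wigner transform
`W(u,v)(x,ξ) = (2π)^{−n} ∫ u(x+y/2) conj(v(x−y/2)) e^{−i(y|ξ)} dy` is a
well-defined Schwartz function on `ℝ^{2n}`, and it satisfies the Moyal identity
`∫ |W(u,v)|² = (2π)^{−n} ‖u‖²_{L²} ‖v‖²_{L²}`. -/
theorem wigner_schwartz_and_moyal (n : ℕ) (hn : 1 ≤ n)
    (u v : SchwartzMap (Fin n → ℝ) ℂ) :
    ∃ W : SchwartzMap ((Fin n → ℝ) × (Fin n → ℝ)) ℂ,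
      (∀ x ξ : Fin n → ℝ,
        W (x, ξ) = ((((2 * Real.pi) ^ n)⁻¹ : ℝ) : ℂ) *
          ∫ y : Fin n → ℝ,
            u (x + (2⁻¹ : ℝ) • y) * (starRingEnd ℂ) (v (x - (2⁻¹ : ℝ) • y)) *
              Complex.exp (-Complex.I * ((dotn y ξ : ℝ) : ℂ))) ∧
      (∫ z : (Fin n → ℝ) × (Fin n → ℝ), ‖W z‖ ^ 2) =
        ((2 * Real.pi) ^ n)⁻¹ * (∫ x : Fin n → ℝ, ‖u x‖ ^ 2) *
          ∫ x : Fin n → ℝ, ‖v x‖ ^ 2 := by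
  let e := EuclideanSpace.equiv (Fin n) ℝ
  let u' := SchwartzMap.compCLMOfContinuousLinearEquiv ℂ e u
  let v' := SchwartzMap.compCLMOfContinuousLinearEquiv ℂ e v
  refine ⟨SchwartzMap.compCLMOfContinuousLinearEquiv ℂ (e.symm.prodCongr e.symm) (wigner u' v'),
    fun x ξ ↦ ?_, ?_⟩
  · have h := wigner_apply u' v' (e.symm x) (e.symm ξ)
    rw [finrank_euclideanSpace_fin] at h
    simp only [inner_eq_dotn] at h
    rw [← integral_comp_ofLp]
    exact h
  · have h := integral_norm_sq_wigner u' v'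
    rw [finrank_euclideanSpace_fin] at h
    rw [← integral_comp_ofLp, ← integral_comp_ofLp fun x ↦ ‖v x‖ ^ 2]
    exact (integral_prod_comp_toLp fun z ↦ ‖wigner u' v' z‖ ^ 2).trans h
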